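/- arXiv:2106.04299 — 6 statements merged into one kernel-verified Lean document; each statement's English description precedes it below -/
import Mathlib

section
/- Core game-value inequality in the proof of the eff*-versus-γ₂ theorem: Let f, f' : X × Y → {−1,+1}, let p be a probability distribution on X × Y, let 0 < ε < 1, and let η > 0. Suppose a finite-dimensional two-party entangled zero-communication protocol with abort has correlation q satisfying: for every (x,y) ∈ X × Y, ∑_{a,b ∈ {−1,+1}} q(a,b|x,y) = η, and ∑_{x,y} p(x,y) ∑_{a,b ∈ {−1,+1} : a·b = f(x,y)} q(a,b|x,y) ≥ (1 − ε)·η. Then 2·ω*(G(p, V_{f'})) − 1 ≥ η · ( ∑_{x,y} p(x,y)·f(x,y)·f'(x,y) − 2ε ). -/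
open Matrix
open scoped Kronecker Classical ComplexOrder

noncomputable section

/-- The sign value of a boolean output: `true ↦ +1`, `false ↦ −1`. -/
def signVal (b : Bool) : ℝ := if b then 1 else -1

/-- A finite-dimensional two-party entangled zero-communication protocol with abort,
with inputs from `X × Y` and outputs in `{−1,+1,⊥}` (encoded as `Option Bool`,
with `some true ↦ +1`, `some false ↦ −1`, `none ↦ ⊥`). -/
structure ZCProtocol (X Y : Type*) where
  dA : ℕ
  dB : ℕ
  ψ : Matrix (Fin dA × Fin dB) (Fin dA × Fin dB) ℂ
  ψ_psd : ψ.PosSemidef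
  ψ_trace : ψ.trace = 1
  M : X → Option Bool → Matrix (Fin dA) (Fin dA) ℂ
  M_psd : ∀ x a, (M x a).PosSemidef
  M_sum : ∀ x, ∑ a : Option Bool, M x a = 1
  N : Y → Option Bool → Matrix (Fin dB) (Fin dB) ℂ
  N_psd : ∀ y b, (N y b).PosSemidef
  N_sum : ∀ y, ∑ b : Option Bool, N y b = 1

/-- The correlation induced by a zero-communication protocol:
q(a,b|x,y) = Tr[(M_{a|x} ⊗ N_{b|y}) ψ]. -/
noncomputable def ZCProtocol.corr {X Y : Type*} (P : ZCProtocol X Y)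
    (x : X) (y : Y) (a b : Option Bool) : ℝ :=
  (((P.M x a ⊗ₖ P.N y b) * P.ψ).trace).re

/-- An abort-free entangled strategy for a two-player XOR game, outputs in `{−1,+1}`
encoded as `Bool`. -/
structure XorStrategy (X Y : Type*) where
  dA : ℕ
  dB : ℕ
  ψ : Matrix (Fin dA × Fin dB) (Fin dA × Fin dB) ℂ
  ψ_psd : ψ.PosSemidef
  ψ_trace : ψ.trace = 1
  M : X → Bool → Matrix (Fin dA) (Fin dA) ℂ
  M_psd : ∀ x a, (M x a).PosSemidef
  M_sum : ∀ x, ∑ a : Bool, M x a = 1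
  N : Y → Bool → Matrix (Fin dB) (Fin dB) ℂ
  N_psd : ∀ y b, (N y b).PosSemidef
  N_sum : ∀ y, ∑ b : Bool, N y b = 1

/-- The winning probability of a strategy in the XOR game G(p, V_{f'}). -/
noncomputable def XorStrategy.value {X Y : Type*} [Fintype X] [Fintype Y]
    (S : XorStrategy X Y) (f' : X → Y → ℝ) (p : X → Y → ℝ) : ℝ :=
  ∑ x, ∑ y, p x y * ∑ a : Bool, ∑ b : Bool,
    if signVal a * signVal b = f' x y
    then (((S.M x a ⊗ₖ S.N y b) * S.ψ).trace).re else 0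

/-- The entangled value ω*(G(p, V_{f'})) of the XOR game: the supremum of the winning
probabilities over all finite-dimensional entangled strategies. -/
noncomputable def xorGameValue {X Y : Type*} [Fintype X] [Fintype Y]
    (f' : X → Y → ℝ) (p : X → Y → ℝ) : ℝ :=
  sSup { r : ℝ | ∃ S : XorStrategy X Y, r = S.value f' p }

/-!
Play the XOR game with the protocol itself, each player replacing `⊥` by a uniformly random sign.
The random signs cancel in the correlator, so the strategy has the correlators `C x y` of the
protocol on non-aborting outcomes. Its bias on the game for `f'` is the `p`-average of
`f' x y * C x y`, and the protocol's success at `f` bounds the `p`-average of `f x y * C x y` from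
below by `(1 - 2 * ε) * η`. As `|C x y| ≤ η`, changing the sign `f x y` to `f' x y` costs at most
`η * (1 - f x y * f' x y)`.
-/

section Signs

theorem signVal_mul_signVal_eq_or (a b : Bool) :
    signVal a * signVal b = 1 ∨ signVal a * signVal b = -1 := by
  cases a <;> cases b <;> simp [signVal]

/-- The total weight that `q` puts on pairs of signs with product `s`: for a distribution `q` of
answers, the probability of winning the XOR game whose target is `s`. -/
def xorWeight (q : Bool → Bool → ℝ) (s : ℝ) : ℝ :=
  ∑ a : Bool, ∑ b : Bool, if signVal a * signVal b = s then q a b else 0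

/-- The correlator of two sign-valued answers, i.e. the expectation of their product, where the
weights `q` need not be normalized. -/
def signCorrelator (q : Bool → Bool → ℝ) : ℝ :=
  ∑ a : Bool, ∑ b : Bool, signVal a * signVal b * q a b

variable {q : Bool → Bool → ℝ} {s t : ℝ}

theorem two_mul_xorWeight (hs : s = 1 ∨ s = -1) :
    2 * xorWeight q s = ∑ a, ∑ b, q a b + s * signCorrelator q := by
  have two_mul_ite (a b : Bool) : 2 * (if signVal a * signVal b = s then q a b else 0) =
      q a b + s * (signVal a * signVal b * q a b) := by
    rcases hs with rfl | rfl <;> rcases signVal_mul_signVal_eq_or a b with h | h <;>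
      norm_num [h, two_mul]
  simp only [xorWeight, signCorrelator, Finset.mul_sum, two_mul_ite, Finset.sum_add_distrib]

theorem xorWeight_le_sum (hq : ∀ a b, 0 ≤ q a b) (s : ℝ) : xorWeight q s ≤ ∑ a, ∑ b, q a b := by
  refine Finset.sum_le_sum fun a _ => Finset.sum_le_sum fun b _ => ?_
  split_ifs
  exacts [le_rfl, hq a b]

theorem mul_signCorrelator_le_sum (hq : ∀ a b, 0 ≤ q a b) (hs : s = 1 ∨ s = -1) :
    s * signCorrelator q ≤ ∑ a, ∑ b, q a b := by
  linarith [two_mul_xorWeight (q := q) hs, xorWeight_le_sum hq s]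

theorem mul_signCorrelator_sub_le (hq : ∀ a b, 0 ≤ q a b) (hs : s = 1 ∨ s = -1)
    (ht : t = 1 ∨ t = -1) :
    s * signCorrelator q - (1 - s * t) * ∑ a, ∑ b, q a b ≤ t * signCorrelator q := by
  have hle := mul_signCorrelator_le_sum hq hs
  obtain rfl | rfl : t = s ∨ t = -s := by
    rcases hs with rfl | rfl <;> simpa [or_comm] using ht
  · have : t * t = 1 := mul_self_eq_one_iff.2 ht
    simp [this]
  · have : s * s = 1 := mul_self_eq_one_iff.2 hs
    linear_combination 2 * hle - (∑ a, ∑ b, q a b) * this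

theorem signCorrelator_bilinear {E F : Type*} [AddCommGroup E] [Module ℝ E] [AddCommGroup F]
    [Module ℝ F] (B : E →ₗ[ℝ] F →ₗ[ℝ] ℝ) (u : Bool → E) (v : Bool → F) :
    signCorrelator (fun a b => B (u a) (v b)) = B (u true - u false) (v true - v false) := by
  simp only [signCorrelator, signVal, Fintype.sum_bool, map_sub, LinearMap.sub_apply, if_true,
    Bool.false_eq_true, if_false]
  ring

end Signs

section Average

variable {X Y : Type*} [Fintype X] [Fintype Y] {p : X → Y → ℝ} {q : X → Y → Bool → Bool → ℝ}
  {f f' : X → Y → ℝ} {c : ℝ}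

theorem two_mul_sum_mul_xorWeight (hf : ∀ x y, f x y = 1 ∨ f x y = -1)
    (hp : ∑ x, ∑ y, p x y = 1) (hqc : ∀ x y, ∑ a, ∑ b, q x y a b = c) :
    2 * ∑ x, ∑ y, p x y * xorWeight (q x y) (f x y) =
      c + ∑ x, ∑ y, p x y * (f x y * signCorrelator (q x y)) := by
  calc
    _ = ∑ x, ∑ y, p x y * (2 * xorWeight (q x y) (f x y)) := by
      simp only [Finset.mul_sum, mul_left_comm]
    _ = (∑ x, ∑ y, p x y) * c + ∑ x, ∑ y, p x y * (f x y * signCorrelator (q x y)) := by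
      simp only [two_mul_xorWeight (hf _ _), hqc, mul_add, Finset.sum_add_distrib, Finset.sum_mul]
    _ = _ := by rw [hp, one_mul]

theorem sum_mul_signCorrelator_sub_le (hf : ∀ x y, f x y = 1 ∨ f x y = -1)
    (hf' : ∀ x y, f' x y = 1 ∨ f' x y = -1) (hp0 : ∀ x y, 0 ≤ p x y)
    (hp : ∑ x, ∑ y, p x y = 1) (hq : ∀ x y a b, 0 ≤ q x y a b)
    (hqc : ∀ x y, ∑ a, ∑ b, q x y a b = c) :
    ∑ x, ∑ y, p x y * (f x y * signCorrelator (q x y)) -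
        c * (1 - ∑ x, ∑ y, p x y * f x y * f' x y) ≤
      ∑ x, ∑ y, p x y * (f' x y * signCorrelator (q x y)) := by
  calc
    _ = ∑ x, ∑ y, p x y * (f x y * signCorrelator (q x y)) -
        ((∑ x, ∑ y, p x y) * c - (∑ x, ∑ y, p x y * f x y * f' x y) * c) := by
      rw [hp]
      ring
    _ = ∑ x, ∑ y, p x y * (f x y * signCorrelator (q x y) - (1 - f x y * f' x y) * c) := by
      simp only [Finset.sum_mul, ← Finset.sum_sub_distrib]
      exact Finset.sum_congr rfl fun x _ => Finset.sum_congr rfl fun y _ => by ring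
    _ ≤ _ := by
      gcongr with x _ y _
      · exact hp0 x y
      · rw [← hqc x y]
        exact mul_signCorrelator_sub_le (hq x y) (hf x y) (hf' x y)

end Average

open scoped MatrixOrder in
theorem trace_mul_nonneg_of_posSemidef {n 𝕜 : Type*} [Fintype n] [RCLike 𝕜] {A B : Matrix n n 𝕜}
    (hA : A.PosSemidef) (hB : B.PosSemidef) : 0 ≤ (A * B).trace := by
  obtain ⟨C, rfl⟩ := CStarAlgebra.nonneg_iff_eq_star_mul_self.mp hB.nonneg
  rw [star_eq_conjTranspose, ← mul_assoc, trace_mul_comm, ← mul_assoc]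
  exact (hA.mul_mul_conjTranspose_same C).trace_nonneg

section BornWeight

variable {m n : Type*} [Fintype m] [Fintype n]

/-- The Born rule `Re Tr[(A ⊗ B) ψ]` for local effects `A`, `B` on a bipartite state `ψ`, as a real
bilinear form. -/
def bornWeight (ψ : Matrix (m × n) (m × n) ℂ) : Matrix m m ℂ →ₗ[ℝ] Matrix n n ℂ →ₗ[ℝ] ℝ :=
  kroneckerBilinear.compr₂
    (Complex.reLm ∘ₗ traceLinearMap (m × n) ℝ ℂ ∘ₗ LinearMap.mulRight ℝ ψ)

variable {ψ : Matrix (m × n) (m × n) ℂ}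

theorem bornWeight_nonneg {A : Matrix m m ℂ} {B : Matrix n n ℂ} (hψ : ψ.PosSemidef)
    (hA : A.PosSemidef) (hB : B.PosSemidef) : 0 ≤ bornWeight ψ A B :=
  (Complex.nonneg_iff.mp (trace_mul_nonneg_of_posSemidef (hA.kronecker hB) hψ)).1

theorem sum_bornWeight_eq_one [DecidableEq m] [DecidableEq n] {ι κ : Type*} [Fintype ι] [Fintype κ]
    {M : ι → Matrix m m ℂ} {N : κ → Matrix n n ℂ} (hψ : ψ.trace = 1) (hM : ∑ a, M a = 1)
    (hN : ∑ b, N b = 1) : ∑ a, ∑ b, bornWeight ψ (M a) (N b) = 1 := by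
  calc
    _ = ∑ a, bornWeight ψ (M a) (∑ b, N b) := by simp only [map_sum]
    _ = bornWeight ψ (∑ a, M a) (∑ b, N b) := (LinearMap.map_sum₂ ..).symm
    _ = 1 := by simp [hM, hN, bornWeight, kroneckerBilinear, hψ]

end BornWeight

section SpreadAbort

variable {n ι : Type*} [Fintype ι]

/-- The measurement that replaces the outcome `none` of `M` by a uniformly random element
of `ι`. -/
def spreadAbort (M : Option ι → Matrix n n ℂ) (a : ι) : Matrix n n ℂ :=
  M (some a) + (Fintype.card ι : ℝ)⁻¹ • M none

theorem posSemidef_spreadAbort {M : Option ι → Matrix n n ℂ} (hM : ∀ a, (M a).PosSemidef) (a : ι) :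
    (spreadAbort M a).PosSemidef :=
  (hM _).add ((hM _).smul (by positivity))

theorem sum_spreadAbort [Nonempty ι] (M : Option ι → Matrix n n ℂ) :
    ∑ a, spreadAbort M a = ∑ a, M a := by
  have card_ne_zero : (Fintype.card ι : ℝ) ≠ 0 := by simp
  simp only [spreadAbort, Finset.sum_add_distrib, Finset.sum_const, Finset.card_univ,
    Fintype.sum_option, ← Nat.cast_smul_eq_nsmul ℝ, smul_inv_smul₀ card_ne_zero, add_comm]

end SpreadAbort

namespace XorStrategy

variable {X Y : Type*} (S : XorStrategy X Y)

/-- The correlation induced by an abort-free strategy, the analogue of `ZCProtocol.corr`. -/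
def corr (x : X) (y : Y) (a b : Bool) : ℝ := bornWeight S.ψ (S.M x a) (S.N y b)

theorem corr_nonneg (x : X) (y : Y) (a b : Bool) : 0 ≤ S.corr x y a b :=
  bornWeight_nonneg S.ψ_psd (S.M_psd x a) (S.N_psd y b)

theorem sum_corr_eq_one (x : X) (y : Y) : ∑ a, ∑ b, S.corr x y a b = 1 :=
  sum_bornWeight_eq_one S.ψ_trace (S.M_sum x) (S.N_sum y)

variable [Fintype X] [Fintype Y] {f' p : X → Y → ℝ}

theorem value_eq_sum_xorWeight (f' p : X → Y → ℝ) :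
    S.value f' p = ∑ x, ∑ y, p x y * xorWeight (S.corr x y) (f' x y) :=
  rfl

theorem two_mul_value_sub_one (hf' : ∀ x y, f' x y = 1 ∨ f' x y = -1)
    (hp : ∑ x, ∑ y, p x y = 1) :
    2 * S.value f' p - 1 = ∑ x, ∑ y, p x y * (f' x y * signCorrelator (S.corr x y)) := by
  rw [value_eq_sum_xorWeight, two_mul_sum_mul_xorWeight hf' hp S.sum_corr_eq_one,
    add_sub_cancel_left]

theorem value_le_sum (f' : X → Y → ℝ) (hp0 : ∀ x y, 0 ≤ p x y) :
    S.value f' p ≤ ∑ x, ∑ y, p x y := by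
  rw [value_eq_sum_xorWeight]
  gcongr with x _ y _
  refine mul_le_of_le_one_right (hp0 x y) ?_
  exact (xorWeight_le_sum (S.corr_nonneg x y) _).trans_eq (S.sum_corr_eq_one x y)

theorem value_le_xorGameValue (f' : X → Y → ℝ) (hp0 : ∀ x y, 0 ≤ p x y) :
    S.value f' p ≤ xorGameValue f' p := by
  refine le_csSup ⟨∑ x, ∑ y, p x y, ?_⟩ ⟨S, rfl⟩
  rintro _ ⟨T, rfl⟩
  exact T.value_le_sum f' hp0

end XorStrategy

namespace ZCProtocol

variable {X Y : Type*} (P : ZCProtocol X Y)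

theorem corr_eq_bornWeight (x : X) (y : Y) (a b : Option Bool) :
    P.corr x y a b = bornWeight P.ψ (P.M x a) (P.N y b) :=
  rfl

theorem corr_nonneg (x : X) (y : Y) (a b : Option Bool) : 0 ≤ P.corr x y a b :=
  bornWeight_nonneg P.ψ_psd (P.M_psd x a) (P.N_psd y b)

/-- The abort-free strategy in which each player, instead of aborting, outputs a uniformly random
sign. -/
def toXorStrategy : XorStrategy X Y where
  dA := P.dA
  dB := P.dB
  ψ := P.ψ
  ψ_psd := P.ψ_psd
  ψ_trace := P.ψ_trace
  M x := spreadAbort (P.M x)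
  M_psd x := posSemidef_spreadAbort (P.M_psd x)
  M_sum x := (sum_spreadAbort (P.M x)).trans (P.M_sum x)
  N y := spreadAbort (P.N y)
  N_psd y := posSemidef_spreadAbort (P.N_psd y)
  N_sum y := (sum_spreadAbort (P.N y)).trans (P.N_sum y)

theorem toXorStrategy_corr (x : X) (y : Y) (a b : Bool) :
    P.toXorStrategy.corr x y a b =
      bornWeight P.ψ (spreadAbort (P.M x) a) (spreadAbort (P.N y) b) :=
  rfl

theorem signCorrelator_toXorStrategy_corr (x : X) (y : Y) :
    signCorrelator (P.toXorStrategy.corr x y) =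
      signCorrelator fun a b => P.corr x y (some a) (some b) := by
  rw [funext₂ (P.toXorStrategy_corr x y)]
  simp only [corr_eq_bornWeight]
  rw [signCorrelator_bilinear, signCorrelator_bilinear _ (fun a => P.M x (some a))]
  simp only [spreadAbort, add_sub_add_right_eq_sub]

end ZCProtocol

/-- **Core game-value inequality** in the proof of the eff*-versus-γ₂ theorem. -/
theorem game_value_inequality
    {X Y : Type*} [Fintype X] [Nonempty X] [Fintype Y] [Nonempty Y]
    (f f' : X → Y → ℝ)
    (hf : ∀ x y, f x y = 1 ∨ f x y = -1)
    (hf' : ∀ x y, f' x y = 1 ∨ f' x y = -1)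
    (p : X → Y → ℝ) (hp0 : ∀ x y, 0 ≤ p x y) (hp1 : ∑ x, ∑ y, p x y = 1)
    (ε : ℝ) (hε0 : 0 < ε) (hε1 : ε < 1)
    (η : ℝ) (hη : 0 < η) (P : ZCProtocol X Y)
    (hnorm : ∀ x y, ∑ a : Bool, ∑ b : Bool, P.corr x y (some a) (some b) = η)
    (hsucc : ∑ x, ∑ y, p x y *
        (∑ a : Bool, ∑ b : Bool,
          if signVal a * signVal b = f x y then P.corr x y (some a) (some b) else 0)
        ≥ (1 - ε) * η) :
    2 * xorGameValue f' p - 1 ≥ η * ((∑ x, ∑ y, p x y * f x y * f' x y) - 2 * ε) := by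
  let q x y a b := P.corr x y (some a) (some b)
  let bias (g : X → Y → ℝ) := ∑ x, ∑ y, p x y * (g x y * signCorrelator (q x y))
  have success : 2 * ((1 - ε) * η) ≤ η + bias f := by
    rw [← two_mul_sum_mul_xorWeight hf hp1 hnorm]
    exact mul_le_mul_of_nonneg_left hsucc two_pos.le
  have change_target : bias f - η * (1 - ∑ x, ∑ y, p x y * f x y * f' x y) ≤ bias f' :=
    sum_mul_signCorrelator_sub_le hf hf' hp0 hp1 (fun x y a b => P.corr_nonneg x y _ _) hnorm
  have strategy_bias : 2 * P.toXorStrategy.value f' p - 1 = bias f' := by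
    simp only [P.toXorStrategy.two_mul_value_sub_one hf' hp1,
      P.signCorrelator_toXorStrategy_corr, bias, q]
  linarith [P.toXorStrategy.value_le_xorGameValue f' hp0]

end
end

section
/- Classical ℓ₁ decomposition lemma: Let A, B, R be finite types, let μ be a probability distribution on A × B × R, and let α, β be probability distributions on A and B respectively. Define ν on A × B × R by ν(a,b,r) = μ_{AR}(a,r)·μ_{BR}(b,r)/μ_R(r) when μ_R(r) > 0, and ν(a,b,r) = 0 when μ_R(r) = 0, where μ_{AR}, μ_{BR}, μ_R are the marginals of μ. Then ‖μ − ν‖₁ ≤ ‖μ − α ⊗ β ⊗ μ_R‖₁ + ‖μ_{BR} − β ⊗ μ_R‖₁ + ‖μ_{AR} − α ⊗ μ_R‖₁. -/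
open scoped Classical

/-!
Let `w(b | r) = μBR(b,r) / μR(r)` be the conditional weights of `b` given `r`. Walk from `μ` to `ν`
through the two hybrids `α ⊗ β ⊗ μR` and `α ⊗ μBR`. The first step is the first error term. The
second step changes only the factor on `B × R`, and multiplication by `α` preserves `ℓ₁` distances.
In the third step `α ⊗ μBR` and `ν` arise from `α ⊗ μR` and `μAR` by applying the same weights `w`,
which does not increase `ℓ₁` distances.
-/

section Marginals

variable {A B R M : Type*} [AddCommMonoid M]

/-- The marginal on `A × R` of a weight on `A × B × R`, in curried form. -/
def marginalAR [Fintype B] (μ : A × B × R → M) (a : A) (r : R) : M :=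
  ∑ b, μ (a, b, r)

/-- The marginal on `B × R` of a weight on `A × B × R`, in curried form. -/
def marginalBR [Fintype A] (μ : A × B × R → M) (b : B) (r : R) : M :=
  ∑ a, μ (a, b, r)

/-- The marginal on `R` of a weight on `A × B × R`. -/
def marginalR [Fintype A] [Fintype B] (μ : A × B × R → M) (r : R) : M :=
  ∑ a, ∑ b, μ (a, b, r)

theorem sum_marginalBR [Fintype A] [Fintype B] (μ : A × B × R → M) (r : R) :
    ∑ b, marginalBR μ b r = marginalR μ r :=
  Finset.sum_comm

variable [PartialOrder M] [IsOrderedAddMonoid M] [Fintype A] {μ : A × B × R → M}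

theorem marginalBR_nonneg (hμ : ∀ s, 0 ≤ μ s) (b : B) (r : R) : 0 ≤ marginalBR μ b r :=
  Finset.sum_nonneg fun _ _ => hμ _

theorem marginalR_nonneg [Fintype B] (hμ : ∀ s, 0 ≤ μ s) (r : R) : 0 ≤ marginalR μ r :=
  Finset.sum_nonneg fun _ _ => Finset.sum_nonneg fun _ _ => hμ _

theorem marginalBR_eq_zero_of_marginalR_eq_zero [Fintype B] (hμ : ∀ s, 0 ≤ μ s) (b : B) {r : R}
    (hr : marginalR μ r = 0) : marginalBR μ b r = 0 := by
  rw [← sum_marginalBR, Finset.sum_eq_zero_iff_of_nonneg fun b _ => marginalBR_nonneg hμ b r] at hr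
  exact hr b (Finset.mem_univ b)

end Marginals

section L1Distance

variable {A B R K : Type*} [Fintype A] [Fintype B] [Fintype R]
  [CommRing K] [LinearOrder K] [IsStrictOrderedRing K]

theorem sum_abs_mul_sub_mul_left (α : A → K) (f g : B → K) :
    ∑ p : A × B, |α p.1 * f p.2 - α p.1 * g p.2| = (∑ a, |α a|) * ∑ b, |f b - g b| := by
  simp_rw [← mul_sub, abs_mul, Fintype.sum_mul_sum, Fintype.sum_prod_type]

theorem sum_abs_mul_kernel_sub_le (f g : A → R → K) {w : B → R → K}
    (hw : ∀ r, ∑ b, |w b r| ≤ 1) :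
    ∑ s : A × B × R, |f s.1 s.2.2 * w s.2.1 s.2.2 - g s.1 s.2.2 * w s.2.1 s.2.2| ≤
      ∑ q : A × R, |f q.1 q.2 - g q.1 q.2| := by
  simp_rw [← sub_mul, abs_mul, Fintype.sum_prod_type]
  refine Finset.sum_le_sum fun a _ => ?_
  rw [Finset.sum_comm]
  refine Finset.sum_le_sum fun r _ => ?_
  rw [← Finset.mul_sum]
  exact mul_le_of_le_one_right (abs_nonneg _) (hw r)

end L1Distance

section ConditionalProduct

variable {A B R K : Type*} [Fintype A] [Fintype B] [Field K] [LinearOrder K]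

/-- The weight `ν`: for nonnegative `μ`, it has the marginals of `μ` on `A × R` and `B × R`, and its
`A` and `B` coordinates are independent given the `R` coordinate. It is set to `0` on the fibres over
the points `r` with `μR(r) = 0`. -/
def conditionalProduct (μ : A × B × R → K) (s : A × B × R) : K :=
  if 0 < marginalR μ s.2.2 then
    marginalAR μ s.1 s.2.2 * marginalBR μ s.2.1 s.2.2 / marginalR μ s.2.2
  else 0

variable [IsStrictOrderedRing K] {μ : A × B × R → K}

theorem conditionalProduct_eq_mul_div (hμ : ∀ s, 0 ≤ μ s) (s : A × B × R) :
    conditionalProduct μ s =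
      marginalAR μ s.1 s.2.2 * (marginalBR μ s.2.1 s.2.2 / marginalR μ s.2.2) := by
  rcases (marginalR_nonneg hμ s.2.2).eq_or_lt with hr | hr
  · simp [conditionalProduct, ← hr]
  · rw [conditionalProduct, if_pos hr, mul_div_assoc]

theorem marginalR_mul_marginalBR_div (hμ : ∀ s, 0 ≤ μ s) (b : B) (r : R) :
    marginalR μ r * (marginalBR μ b r / marginalR μ r) = marginalBR μ b r :=
  mul_div_cancel_of_imp' (marginalBR_eq_zero_of_marginalR_eq_zero hμ b)

theorem sum_abs_marginalBR_div_le_one (hμ : ∀ s, 0 ≤ μ s) (r : R) :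
    ∑ b, |marginalBR μ b r / marginalR μ r| ≤ 1 := by
  have hw (b : B) : 0 ≤ marginalBR μ b r / marginalR μ r :=
    div_nonneg (marginalBR_nonneg hμ b r) (marginalR_nonneg hμ r)
  simp_rw [abs_of_nonneg (hw _), ← Finset.sum_div, sum_marginalBR]
  exact div_self_le_one _

variable [Fintype R]

theorem sum_abs_prod_sub_prod_marginalBR_le (μ : A × B × R → K) {α : A → K}
    (hα : ∑ a, |α a| ≤ 1) (β : B → K) :
    ∑ s : A × B × R, |α s.1 * β s.2.1 * marginalR μ s.2.2 - α s.1 * marginalBR μ s.2.1 s.2.2| ≤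
      ∑ q : B × R, |marginalBR μ q.1 q.2 - β q.1 * marginalR μ q.2| := by
  simp_rw [mul_assoc, abs_sub_comm (marginalBR μ _ _)]
  rw [sum_abs_mul_sub_mul_left α (fun q : B × R => β q.1 * marginalR μ q.2)
    fun q => marginalBR μ q.1 q.2]
  exact mul_le_of_le_one_left (Finset.sum_nonneg fun _ _ => abs_nonneg _) hα

theorem sum_abs_prod_marginalBR_sub_conditionalProduct_le (hμ : ∀ s, 0 ≤ μ s) (α : A → K) :
    ∑ s : A × B × R, |α s.1 * marginalBR μ s.2.1 s.2.2 - conditionalProduct μ s| ≤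
      ∑ q : A × R, |marginalAR μ q.1 q.2 - α q.1 * marginalR μ q.2| := by
  have kernel_bound := sum_abs_mul_kernel_sub_le (fun a r => α a * marginalR μ r) (marginalAR μ)
    (sum_abs_marginalBR_div_le_one hμ)
  simpa only [mul_assoc, marginalR_mul_marginalBR_div hμ, ← conditionalProduct_eq_mul_div hμ,
    abs_sub_comm (α _ * marginalR μ _)] using kernel_bound

theorem l1_decomposition_lemma_general (μ : A × B × R → K) (hμ : ∀ s, 0 ≤ μ s) (α : A → K)
    (hα : ∑ a, |α a| ≤ 1) (β : B → K) :
    ∑ s, |μ s - conditionalProduct μ s| ≤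
      (∑ s : A × B × R, |μ s - α s.1 * β s.2.1 * marginalR μ s.2.2|) +
      (∑ q : B × R, |marginalBR μ q.1 q.2 - β q.1 * marginalR μ q.2|) +
      (∑ q : A × R, |marginalAR μ q.1 q.2 - α q.1 * marginalR μ q.2|) :=
  calc ∑ s, |μ s - conditionalProduct μ s|
    _ ≤ ∑ s : A × B × R, (|μ s - α s.1 * β s.2.1 * marginalR μ s.2.2| +
          |α s.1 * β s.2.1 * marginalR μ s.2.2 - α s.1 * marginalBR μ s.2.1 s.2.2| +
          |α s.1 * marginalBR μ s.2.1 s.2.2 - conditionalProduct μ s|) :=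
      Finset.sum_le_sum fun _ _ =>
        (abs_sub_le _ _ _).trans (add_le_add_left (abs_sub_le _ _ _) _)
    _ ≤ _ := by
      rw [Finset.sum_add_distrib, Finset.sum_add_distrib]
      gcongr
      · exact sum_abs_prod_sub_prod_marginalBR_le μ hα β
      · exact sum_abs_prod_marginalBR_sub_conditionalProduct_le hμ α

end ConditionalProduct

/-- **Classical ℓ₁ decomposition lemma.**  Here `μR`, `μAR`, `μBR` are the marginals of `μ`
and `ν(a,b,r) = μAR(a,r)·μBR(b,r)/μR(r)` (and `0` when `μR(r) = 0`). -/
theorem l1_decomposition_lemma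
    {A B R : Type*} [Fintype A] [Nonempty A] [Fintype B] [Nonempty B]
    [Fintype R] [Nonempty R]
    (μ : A × B × R → ℝ) (hμ0 : ∀ s, 0 ≤ μ s) (hμ1 : ∑ s, μ s = 1)
    (α : A → ℝ) (hα0 : ∀ a, 0 ≤ α a) (hα1 : ∑ a, α a = 1)
    (β : B → ℝ) (hβ0 : ∀ b, 0 ≤ β b) (hβ1 : ∑ b, β b = 1) :
    let μR : R → ℝ := fun r => ∑ a, ∑ b, μ (a, b, r)
    let μAR : A → R → ℝ := fun a r => ∑ b, μ (a, b, r)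
    let μBR : B → R → ℝ := fun b r => ∑ a, μ (a, b, r)
    let ν : A × B × R → ℝ := fun s =>
      if 0 < μR s.2.2 then μAR s.1 s.2.2 * μBR s.2.1 s.2.2 / μR s.2.2 else 0
    ∑ s : A × B × R, |μ s - ν s| ≤
      (∑ s : A × B × R, |μ s - α s.1 * β s.2.1 * μR s.2.2|) +
      (∑ q : B × R, |μBR q.1 q.2 - β q.1 * μR q.2|) +
      (∑ q : A × R, |μAR q.1 q.2 - α q.1 * μR q.2|) :=
  l1_decomposition_lemma_general μ hμ0 α (by simp [abs_of_nonneg (hα0 _), hα1]) β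
end

section
/- Averaged Pinsker bound against a product reference: Let X₁, …, X_m and R be finite types, let Qᵢ be a probability distribution on Xᵢ for each i ∈ {1,…,m}, and let P be a probability distribution on (X₁ × ⋯ × X_m) × R that is absolutely continuous with respect to (Q₁ ⊗ ⋯ ⊗ Q_m) ⊗ P_R (i.e., P(x,r) > 0 implies Qᵢ(xᵢ) > 0 for every i). Then (1/m) · ∑_{i=1}^m ‖P_{XᵢR} − Qᵢ ⊗ P_R‖₁ ≤ √( (2/m) · D( P ‖ (Q₁ ⊗ ⋯ ⊗ Q_m) ⊗ P_R ) ), where P_{XᵢR} and P_R are the marginals of P on Xᵢ × R and R respectively. -/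
open scoped Classical

/-!
Write each `ℓ₁` distance as the pairing of `P_{XᵢR} - Qᵢ ⊗ P_R` with its own sign, and let `sᵢ` be
that sign times a weight `wᵢ`.  The weighted sum of the distances is then the `P`-expectation of the
test function `∑ᵢ (sᵢ(xᵢ, r) - ∑_y Qᵢ(y) sᵢ(y, r))`.  Under the product reference, and conditionally
on `r`, this is a sum of independent centred terms with values in intervals of length `2 |wᵢ|`, so
by Hoeffding's lemma it is sub-Gaussian with variance proxy `∑ᵢ wᵢ²`.  The Gibbs variational
principle turns that into a bound by `√(2 (∑ᵢ wᵢ²) D)` on its `P`-expectation.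
-/

section RelEntropy

variable {S : Type*} [Fintype S] {p q : S → ℝ}

/-- The relative entropy `D(p ‖ q)` in nats, as a sum over the support of `p`.  It has its usual
meaning when `q` is positive on that support; elsewhere `log (p s / 0) = 0`. -/
noncomputable def relEntropy (p q : S → ℝ) : ℝ :=
  ∑ s, if 0 < p s then p s * Real.log (p s / q s) else 0

lemma sum_sub_sum_le_relEntropy (hq : ∀ s, 0 ≤ q s) (hpq : ∀ s, 0 < p s → 0 < q s) :
    ∑ s, p s - ∑ s, q s ≤ relEntropy p q := by
  rw [← Finset.sum_sub_distrib]
  refine Finset.sum_le_sum fun s _ => ?_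
  split_ifs with hs
  · have hlog := Real.one_sub_inv_le_log_of_pos (div_pos hs (hpq s hs))
    calc p s - q s = p s * (1 - (p s / q s)⁻¹) := by field_simp
      _ ≤ p s * Real.log (p s / q s) := mul_le_mul_of_nonneg_left hlog hs.le
  · linarith [hq s]

lemma relEntropy_mul_exp (hp : ∀ s, 0 ≤ p s) (hpq : ∀ s, 0 < p s → 0 < q s) (f : S → ℝ) :
    relEntropy p (fun s => q s * Real.exp (f s)) = relEntropy p q - ∑ s, p s * f s := by
  rw [relEntropy, relEntropy, ← Finset.sum_sub_distrib]
  refine Finset.sum_congr rfl fun s _ => ?_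
  split_ifs with hs
  · rw [← div_div, Real.log_div (div_pos hs (hpq s hs)).ne' (Real.exp_ne_zero _), Real.log_exp,
      mul_sub]
  · simp [le_antisymm (not_lt.mp hs) (hp s)]

/-- The Donsker–Varadhan bound: Gibbs' inequality against the tilted weights `q * exp (f - c)`,
whose total mass is at most one. -/
lemma sum_mul_le_relEntropy_add (hp : p ∈ stdSimplex ℝ S) (hq : ∀ s, 0 ≤ q s)
    (hpq : ∀ s, 0 < p s → 0 < q s) {f : S → ℝ} {c : ℝ}
    (hf : ∑ s, q s * Real.exp (f s) ≤ Real.exp c) :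
    ∑ s, p s * f s ≤ relEntropy p q + c := by
  have hgibbs := sum_sub_sum_le_relEntropy
    (fun s => mul_nonneg (hq s) (Real.exp_pos (f s - c)).le)
    (fun s hs => mul_pos (hpq s hs) (Real.exp_pos _))
  have hmass : ∑ s, q s * Real.exp (f s - c) ≤ 1 := by
    simp only [Real.exp_sub, ← mul_div_assoc, ← Finset.sum_div]
    exact div_le_one_of_le₀ hf (Real.exp_pos c).le
  have hmean : ∑ s, p s * (f s - c) = ∑ s, p s * f s - c := by
    simp only [mul_sub, Finset.sum_sub_distrib, ← Finset.sum_mul, hp.2, one_mul]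
  rw [relEntropy_mul_exp hp.1 hpq, hp.2, hmean] at hgibbs
  linarith

lemma sq_sum_mul_le_of_subgaussian (hp : p ∈ stdSimplex ℝ S) (hq : ∀ s, 0 ≤ q s)
    (hpq : ∀ s, 0 < p s → 0 < q s) {f : S → ℝ} {c : ℝ}
    (hf : ∀ t : ℝ, ∑ s, q s * Real.exp (t * f s) ≤ Real.exp (c * t ^ 2 / 2)) :
    (∑ s, p s * f s) ^ 2 ≤ 2 * c * relEntropy p q := by
  have hquad (t : ℝ) : 0 ≤ c / 2 * (t * t) + -(∑ s, p s * f s) * t + relEntropy p q := by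
    have hvar := sum_mul_le_relEntropy_add hp hq hpq (hf t)
    simp only [mul_left_comm _ t, ← Finset.mul_sum] at hvar
    linarith
  have hdiscrim := discrim_le_zero hquad
  rw [discrim, neg_sq] at hdiscrim
  linarith

end RelEntropy

lemma hoeffding_sum_mul_exp_sub_mean_le {S : Type*} [Fintype S] {q : S → ℝ}
    (hq : q ∈ stdSimplex ℝ S) {f : S → ℝ} {a b : ℝ} (hf : ∀ s, f s ∈ Set.Icc a b) (t : ℝ) :
    ∑ s, q s * Real.exp (t * (f s - ∑ y, q y * f y)) ≤
      Real.exp (((b - a) / 2) ^ 2 * t ^ 2 / 2) := by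
  let : MeasurableSpace S := ⊤
  let μ : PMF S := PMF.ofFintype (fun s => ENNReal.ofReal (q s)) (by
    rw [← ENNReal.ofReal_sum_of_nonneg (fun s _ => hq.1 s), hq.2, ENNReal.ofReal_one])
  have hint (g : S → ℝ) : ∫ s, g s ∂μ.toMeasure = ∑ s, q s * g s := by
    simp [PMF.integral_eq_sum, μ, ENNReal.toReal_ofReal (hq.1 _)]
  have hmgf := (ProbabilityTheory.hasSubgaussianMGF_of_mem_Icc (μ := μ.toMeasure)
    measurable_from_top.aemeasurable (Filter.Eventually.of_forall hf)).mgf_le t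
  rw [ProbabilityTheory.mgf, hint, hint] at hmgf
  simpa [div_pow] using hmgf

section SndMarginal

variable {α R : Type*} [Fintype α]

/-- The marginal of `P` on the second factor; for `α = ∏ᵢ Xᵢ` this is `P_R`. -/
def sndMarginal (P : α × R → ℝ) (r : R) : ℝ :=
  ∑ x, P (x, r)

lemma le_sndMarginal {P : α × R → ℝ} (hP : ∀ z, 0 ≤ P z) (z : α × R) : P z ≤ sndMarginal P z.2 :=
  Finset.single_le_sum (f := fun x => P (x, z.2)) (fun _ _ => hP _) (Finset.mem_univ z.1)

lemma sndMarginal_mem_stdSimplex [Fintype R] {P : α × R → ℝ} (hP : P ∈ stdSimplex ℝ (α × R)) :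
    sndMarginal P ∈ stdSimplex ℝ R :=
  ⟨fun _ => Finset.sum_nonneg fun _ _ => hP.1 _,
    (Fintype.sum_prod_type_right P).symm.trans hP.2⟩

end SndMarginal

section ProductReference

variable {ι : Type*} [Fintype ι] {X : ι → Type*} {R : Type*}

/-- The product `(⊗ᵢ Qᵢ) ⊗ ρ`, from which the relative entropy of `P` is taken with `ρ = P_R`. -/
def prodReference (Q : ∀ i, X i → ℝ) (ρ : R → ℝ) (z : (∀ i, X i) × R) : ℝ :=
  (∏ i, Q i (z.1 i)) * ρ z.2

variable [∀ i, Fintype (X i)]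

/-- The test function `∑ᵢ (sᵢ(xᵢ, r) - ∑_y Qᵢ(y) sᵢ(y, r))`: for fixed `r`, the `i`-th term has mean
zero under `Qᵢ`. -/
def centeredSum (Q : ∀ i, X i → ℝ) (s : ∀ i, X i → R → ℝ) (z : (∀ i, X i) × R) : ℝ :=
  ∑ i, (s i (z.1 i) z.2 - ∑ y, Q i y * s i y z.2)

variable [DecidableEq ι]

/-- The marginal `P_{XᵢR}` on `Xᵢ × R` of a function `P` on `(∏ᵢ Xᵢ) × R`. -/
noncomputable def coordMarginal (P : (∀ i, X i) × R → ℝ) (i : ι) (xi : X i) (r : R) : ℝ :=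
  ∑ x, if x i = xi then P (x, r) else 0

lemma sum_coordMarginal_mul (P : (∀ i, X i) × R → ℝ) (i : ι) (g : X i → ℝ) (r : R) :
    ∑ xi, coordMarginal P i xi r * g xi = ∑ x, P (x, r) * g (x i) := by
  simp only [coordMarginal, Finset.sum_mul, ite_mul, zero_mul]
  rw [Finset.sum_comm]
  simp

lemma prodReference_sndMarginal_pos {Q : ∀ i, X i → ℝ} {P : (∀ i, X i) × R → ℝ}
    (hP : ∀ z, 0 ≤ P z) {z : (∀ i, X i) × R} (hz : 0 < P z) (hQ : ∀ i, 0 < Q i (z.1 i)) :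
    0 < prodReference Q (sndMarginal P) z :=
  mul_pos (Finset.prod_pos fun i _ => hQ i) (hz.trans_le (le_sndMarginal hP z))

variable [Fintype R]

lemma sum_mul_centeredSum (Q : ∀ i, X i → ℝ) (P : (∀ i, X i) × R → ℝ)
    (s : ∀ i, X i → R → ℝ) :
    ∑ z, P z * centeredSum Q s z =
      ∑ i, ∑ xi, ∑ r, (coordMarginal P i xi r - Q i xi * sndMarginal P r) * s i xi r := by
  have hterm (i : ι) (r : R) :
      ∑ x, P (x, r) * (s i (x i) r - ∑ y, Q i y * s i y r) =
        ∑ xi, (coordMarginal P i xi r - Q i xi * sndMarginal P r) * s i xi r := by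
    simp only [mul_sub, sub_mul, Finset.sum_sub_distrib, sum_coordMarginal_mul,
      mul_right_comm _ (sndMarginal P r), ← Finset.sum_mul]
    rw [mul_comm, sndMarginal]
  calc ∑ z, P z * centeredSum Q s z
      = ∑ r, ∑ i, ∑ x, P (x, r) * (s i (x i) r - ∑ y, Q i y * s i y r) := by
        rw [Fintype.sum_prod_type_right]
        refine Finset.sum_congr rfl fun r _ => ?_
        simp only [centeredSum, Finset.mul_sum]
        exact Finset.sum_comm
    _ = ∑ i, ∑ xi, ∑ r, (coordMarginal P i xi r - Q i xi * sndMarginal P r) * s i xi r := by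
        rw [Finset.sum_comm]
        refine Finset.sum_congr rfl fun i _ => ?_
        simp only [hterm]
        exact Finset.sum_comm

lemma sum_prodReference_mul_exp_sum (Q : ∀ i, X i → ℝ) (ρ : R → ℝ) (g : ∀ i, X i → R → ℝ) :
    ∑ z, prodReference Q ρ z * Real.exp (∑ i, g i (z.1 i) z.2) =
      ∑ r, ρ r * ∏ i, ∑ xi, Q i xi * Real.exp (g i xi r) := by
  rw [Fintype.sum_prod_type_right]
  refine Finset.sum_congr rfl fun r _ => ?_
  rw [Fintype.prod_sum, Finset.mul_sum]
  refine Finset.sum_congr rfl fun x _ => ?_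
  rw [prodReference, Real.exp_sum, Finset.prod_mul_distrib]
  ring

lemma sum_prodReference_mul_exp_centeredSum_le {Q : ∀ i, X i → ℝ}
    (hQ : ∀ i, Q i ∈ stdSimplex ℝ (X i)) {ρ : R → ℝ} (hρ : ρ ∈ stdSimplex ℝ R)
    {s : ∀ i, X i → R → ℝ} {a b : ι → ℝ}
    (hs : ∀ i xi r, s i xi r ∈ Set.Icc (a i) (b i)) (t : ℝ) :
    ∑ z, prodReference Q ρ z * Real.exp (t * centeredSum Q s z) ≤
      Real.exp ((∑ i, ((b i - a i) / 2) ^ 2) * t ^ 2 / 2) := by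
  have hprod (r : R) :
      ∏ i, ∑ xi, Q i xi * Real.exp (t * (s i xi r - ∑ y, Q i y * s i y r)) ≤
        Real.exp ((∑ i, ((b i - a i) / 2) ^ 2) * t ^ 2 / 2) := by
    calc _ ≤ ∏ i, Real.exp (((b i - a i) / 2) ^ 2 * t ^ 2 / 2) :=
          Finset.prod_le_prod
            (fun i _ => Finset.sum_nonneg fun xi _ =>
              mul_nonneg ((hQ i).1 xi) (Real.exp_pos _).le)
            (fun i _ => hoeffding_sum_mul_exp_sub_mean_le (hQ i) (fun xi => hs i xi r) t)
      _ = Real.exp ((∑ i, ((b i - a i) / 2) ^ 2) * t ^ 2 / 2) := by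
          rw [← Real.exp_sum, Finset.sum_mul, Finset.sum_div]
  simp only [centeredSum, Finset.mul_sum]
  rw [sum_prodReference_mul_exp_sum Q ρ fun i xi r => t * (s i xi r - ∑ y, Q i y * s i y r)]
  calc _ ≤ ∑ r, ρ r * Real.exp ((∑ i, ((b i - a i) / 2) ^ 2) * t ^ 2 / 2) :=
        Finset.sum_le_sum fun r _ => mul_le_mul_of_nonneg_left (hprod r) (hρ.1 r)
    _ = Real.exp ((∑ i, ((b i - a i) / 2) ^ 2) * t ^ 2 / 2) := by
        rw [← Finset.sum_mul, hρ.2, one_mul]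

lemma sq_sum_mul_centeredSum_le {Q : ∀ i, X i → ℝ} (hQ : ∀ i, Q i ∈ stdSimplex ℝ (X i))
    {P : (∀ i, X i) × R → ℝ} (hP : P ∈ stdSimplex ℝ _)
    (hac : ∀ x r, 0 < P (x, r) → ∀ i, 0 < Q i (x i))
    {s : ∀ i, X i → R → ℝ} {a b : ι → ℝ}
    (hs : ∀ i xi r, s i xi r ∈ Set.Icc (a i) (b i)) :
    (∑ z, P z * centeredSum Q s z) ^ 2 ≤
      2 * (∑ i, ((b i - a i) / 2) ^ 2) * relEntropy P (prodReference Q (sndMarginal P)) :=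
  have hPR := sndMarginal_mem_stdSimplex hP
  sq_sum_mul_le_of_subgaussian hP
    (fun _ => mul_nonneg (Finset.prod_nonneg fun i _ => (hQ i).1 _) (hPR.1 _))
    (fun z hz => prodReference_sndMarginal_pos hP.1 hz (hac z.1 z.2 hz))
    (sum_prodReference_mul_exp_centeredSum_le hQ hPR hs)

theorem averaged_pinsker_bound_general (w : ι → ℝ) {Q : ∀ i, X i → ℝ}
    (hQ : ∀ i, Q i ∈ stdSimplex ℝ (X i)) {P : (∀ i, X i) × R → ℝ} (hP : P ∈ stdSimplex ℝ _)
    (hac : ∀ x r, 0 < P (x, r) → ∀ i, 0 < Q i (x i)) :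
    ∑ i, w i * ∑ xi, ∑ r, |coordMarginal P i xi r - Q i xi * sndMarginal P r| ≤
      Real.sqrt (2 * (∑ i, w i ^ 2) * relEntropy P (prodReference Q (sndMarginal P))) := by
  let δ (i : ι) (xi : X i) (r : R) : ℝ := coordMarginal P i xi r - Q i xi * sndMarginal P r
  let s (i : ι) (xi : X i) (r : R) : ℝ := w i * SignType.sign (δ i xi r)
  have hs (i : ι) (xi : X i) (r : R) : s i xi r ∈ Set.Icc (-|w i|) |w i| := by
    refine abs_le.mp ?_
    rcases SignType.trichotomy (SignType.sign (δ i xi r)) with h | h | h <;> simp [s, h]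
  have hpairing : ∑ z, P z * centeredSum Q s z = ∑ i, w i * ∑ xi, ∑ r, |δ i xi r| := by
    simp only [sum_mul_centeredSum, s, δ, mul_left_comm _ (w _), self_mul_sign, Finset.mul_sum]
  have hproxy : ∑ i, ((|w i| - -|w i|) / 2) ^ 2 = ∑ i, w i ^ 2 := by
    simp only [sub_neg_eq_add, add_self_div_two, sq_abs]
  have hsq := sq_sum_mul_centeredSum_le hQ hP hac hs
  rw [hpairing, hproxy] at hsq
  exact Real.le_sqrt_of_sq_le hsq

end ProductReference

/-- **Averaged Pinsker bound against a product reference.**  `PR` is the marginal of `P` on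
`R`, `PiR i` is the marginal of `P` on `Xᵢ × R`, and `D` is the relative entropy (in nats)
of `P` from `(Q₁ ⊗ ⋯ ⊗ Q_m) ⊗ P_R`. -/
theorem averaged_pinsker_bound
    {m : ℕ} (hm : 0 < m)
    (X : Fin m → Type*) [∀ i, Fintype (X i)] [∀ i, Nonempty (X i)]
    {R : Type*} [Fintype R] [Nonempty R]
    (Q : ∀ i, X i → ℝ) (hQ0 : ∀ i xi, 0 ≤ Q i xi) (hQ1 : ∀ i, ∑ xi, Q i xi = 1)
    (P : ((∀ i, X i) × R) → ℝ) (hP0 : ∀ s, 0 ≤ P s) (hP1 : ∑ s, P s = 1)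
    (hac : ∀ (x : ∀ i, X i) (r : R), 0 < P (x, r) → ∀ i, 0 < Q i (x i)) :
    let PR : R → ℝ := fun r => ∑ x, P (x, r)
    let PiR : ∀ i : Fin m, X i → R → ℝ :=
      fun i xi r => ∑ x, if x i = xi then P (x, r) else 0
    let D : ℝ :=
      ∑ s, if 0 < P s then P s * Real.log (P s / ((∏ i, Q i (s.1 i)) * PR s.2)) else 0
    (1 / m) * ∑ i, ∑ xi, ∑ r, |PiR i xi r - Q i xi * PR r| ≤
      Real.sqrt ((2 / m) * D) := by
  intro PR PiR D
  have hweights : 2 * ∑ _i : Fin m, (1 / m : ℝ) ^ 2 = 2 / m := by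
    rw [Fin.sum_const, nsmul_eq_mul]
    field_simp
  rw [Finset.mul_sum, ← hweights]
  exact averaged_pinsker_bound_general _ (fun i => ⟨hQ0 i, hQ1 i⟩) ⟨hP0, hP1⟩ hac
end

section
/- Dimension bound for the relative min-entropy: For any finite nonempty types Y and Z and any quantum state ρ on Y × Z, there exists a quantum state σ_Z on Z such that ρ ≤ (min(|Y|, |Z|))² · (ρ_Y ⊗ σ_Z) in the Loewner order, where ρ_Y is the marginal of ρ on Y and |Y|, |Z| denote cardinalities. (Equivalently, inf over states σ_Z of D_∞(ρ_{YZ} ‖ ρ_Y ⊗ σ_Z) ≤ 2·min(log|Y|, log|Z|), where D_∞(ρ‖σ) = min{λ : ρ ≤ 2^λ σ}.) -/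
open Matrix
open scoped Kronecker Classical ComplexOrder

noncomputable section

/-- A quantum state: a positive semidefinite complex matrix with trace 1. -/
def IsState {S : Type*} [Fintype S] [DecidableEq S] (ρ : Matrix S S ℂ) : Prop :=
  ρ.PosSemidef ∧ ρ.trace = 1

/-- Marginal on the first factor (partial trace over the second factor). -/
noncomputable def margA {A B : Type*} [Fintype A] [Fintype B]
    (ρ : Matrix (A × B) (A × B) ℂ) : Matrix A A ℂ :=
  Matrix.of fun a a' => ∑ b, ρ (a, b) (a', b)

/-!
A positive semidefinite matrix on `A × B` is at most `|B|` times its block-diagonal part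
(the pinching inequality). Pinching along `Z` bounds `ρ` by `|Z| · ρ_Y ⊗ 1`, since every diagonal
block is at most the sum `ρ_Y` of all of them, and `1` is `|Z|` times a state. Pinching along `Y` in
an eigenbasis of `ρ_Y` leaves the blocks `λ_y σ_y`, where the eigenvalues `λ_y` of `ρ_Y` are the
traces of the blocks and the `σ_y` are states; each block is at most `λ_y · ∑ σ`, and `∑ σ` is `|Y|`
times a state.
-/

section LoewnerOrder

open scoped MatrixOrder

variable {𝕜 ι m n : Type*} [RCLike 𝕜]

theorem sum_mul_mul_conjTranspose_sum_le [Fintype ι] [Finite m] [Fintype n] {M : Matrix n n 𝕜}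
    (hM : M.PosSemidef) (K : ι → Matrix m n 𝕜) :
    (∑ i, K i) * M * (∑ i, K i)ᴴ ≤ Fintype.card ι • ∑ i, K i * M * (K i)ᴴ := by
  have variance_eq : Fintype.card ι • ∑ i, K i * M * (K i)ᴴ - (∑ i, K i) * M * (∑ i, K i)ᴴ
      = (2⁻¹ : ℝ) • ∑ i, ∑ j, (K i - K j) * M * (K i - K j)ᴴ := by
    have double_sum_eq : ∑ i, ∑ j, (K i - K j) * M * (K i - K j)ᴴ
        = (2 : ℝ) • (Fintype.card ι • ∑ i, K i * M * (K i)ᴴ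
          - (∑ i, K i) * M * (∑ i, K i)ᴴ) := by
      simp only [conjTranspose_sub, conjTranspose_sum, Matrix.sub_mul, Matrix.mul_sub,
        Finset.sum_sub_distrib, Finset.sum_const, Finset.card_univ, ← Matrix.mul_sum,
        ← Matrix.sum_mul, ← Finset.smul_sum, two_smul]
      abel
    rw [double_sum_eq, smul_smul, inv_mul_cancel₀ two_ne_zero, one_smul]
  rw [le_iff, variance_eq]
  exact (posSemidef_sum _ fun i _ => posSemidef_sum _ fun j _ =>
    hM.mul_mul_conjTranspose_same _).smul (by positivity)

theorem posSemidef_blockDiagonal [Finite m] [Finite n] [DecidableEq n]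
    {N : n → Matrix m m 𝕜} (hN : ∀ k, (N k).PosSemidef) : (blockDiagonal N).PosSemidef := by
  have := Fintype.ofFinite m
  have := Fintype.ofFinite n
  choose X hX using fun k => CStarAlgebra.nonneg_iff_eq_star_mul_self.mp (hN k).nonneg
  have factorization : blockDiagonal N = (blockDiagonal X)ᴴ * blockDiagonal X := by
    rw [blockDiagonal_conjTranspose, ← blockDiagonal_mul]
    exact congrArg blockDiagonal (funext hX)
  exact factorization ▸ posSemidef_conjTranspose_mul_self _

theorem blockDiagonal_mono [Finite m] [Finite n] [DecidableEq n]
    {M N : n → Matrix m m 𝕜} (h : ∀ k, M k ≤ N k) : blockDiagonal M ≤ blockDiagonal N := by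
  rw [le_iff, ← blockDiagonal_sub]
  exact posSemidef_blockDiagonal h

theorem le_card_smul_blockDiagonal_blockDiag [Finite m] [Fintype n] [DecidableEq n]
    {M : Matrix (m × n) (m × n) 𝕜} (hM : M.PosSemidef) :
    M ≤ Fintype.card n • blockDiagonal (blockDiag M) := by
  have := Fintype.ofFinite m
  let P (k : n) : Matrix (m × n) (m × n) 𝕜 := diagonal fun p => if p.2 = k then 1 else 0
  have sum_P : ∑ k, P k = 1 := by
    ext p q
    simp [P, Matrix.sum_apply, diagonal_apply, one_apply]
  have sum_P_conj : ∑ k, P k * M * (P k)ᴴ = blockDiagonal (blockDiag M) := by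
    ext ⟨i, k⟩ ⟨j, l⟩
    rcases eq_or_ne k l with rfl | hkl
    · simp [P, Matrix.sum_apply, diagonal_conjTranspose, blockDiagonal_apply, blockDiag_apply]
    · simp [P, Matrix.sum_apply, diagonal_conjTranspose, blockDiagonal_apply, hkl]
  simpa [sum_P, sum_P_conj] using sum_mul_mul_conjTranspose_sum_le hM P

theorem le_card_smul_kronecker_diagonal [Finite m] [Fintype n] [DecidableEq n]
    {M : Matrix (m × n) (m × n) 𝕜} (hM : M.PosSemidef) {W : Matrix m m 𝕜} {d : n → 𝕜}
    (h : ∀ k, blockDiag M k ≤ d k • W) : M ≤ Fintype.card n • (W ⊗ₖ diagonal d) :=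
  calc M ≤ Fintype.card n • blockDiagonal (blockDiag M) := le_card_smul_blockDiagonal_blockDiag hM
    _ ≤ Fintype.card n • blockDiagonal fun k => d k • W :=
      nsmul_le_nsmul_right (blockDiagonal_mono h) _
    _ = Fintype.card n • (W ⊗ₖ diagonal d) := by simp only [kronecker_diagonal, op_smul_eq_smul]

theorem le_card_smul_diagonal_kronecker [Fintype m] [DecidableEq m] [Finite n]
    {M : Matrix (m × n) (m × n) 𝕜} (hM : M.PosSemidef) {W : Matrix n n 𝕜} {d : m → 𝕜}
    (h : ∀ i, M.submatrix (Prod.mk i) (Prod.mk i) ≤ d i • W) :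
    M ≤ Fintype.card m • (diagonal d ⊗ₖ W) := by
  have swapped : M.submatrix Prod.swap Prod.swap ≤ Fintype.card m • (W ⊗ₖ diagonal d) :=
    le_card_smul_kronecker_diagonal (hM.submatrix _) h
  have swap_smul_kronecker : (Fintype.card m • (W ⊗ₖ diagonal d)).submatrix Prod.swap Prod.swap
      = Fintype.card m • (diagonal d ⊗ₖ W) := by
    ext ⟨i, k⟩ ⟨j, l⟩
    simp [-nsmul_eq_mul, Matrix.smul_apply, mul_comm]
  rw [le_iff, ← swap_smul_kronecker]
  exact PosSemidef.submatrix swapped Prod.swap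

end LoewnerOrder

theorem exists_mem_unitaryGroup_conj_eq_diagonal {𝕜 n : Type*} [RCLike 𝕜] [Fintype n]
    [DecidableEq n] {M : Matrix n n 𝕜} (hM : M.IsHermitian) :
    ∃ U ∈ unitaryGroup n 𝕜, ∃ d : n → 𝕜, Uᴴ * M * U = diagonal d :=
  ⟨_, hM.eigenvectorUnitary.2, _, by
    simpa [Unitary.conjStarAlgAut_star_apply] using! hM.conjStarAlgAut_star_eigenvectorUnitary⟩

section States

variable {n ι : Type*} [Fintype n] [DecidableEq n]

theorem isState_inv_trace_smul {M : Matrix n n ℂ} (hM : M.PosSemidef) (h : M.trace ≠ 0) :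
    IsState (M.trace⁻¹ • M) :=
  ⟨hM.smul (inv_nonneg.mpr hM.trace_nonneg), by rw [trace_smul, smul_eq_mul, inv_mul_cancel₀ h]⟩

theorem isState_inv_card_smul_one [Nonempty n] :
    IsState ((Fintype.card n : ℂ)⁻¹ • (1 : Matrix n n ℂ)) := by
  simpa using isState_inv_trace_smul (PosSemidef.one (n := n)) (by simp)

theorem isState_inv_card_smul_sum [Fintype ι] [Nonempty ι] {σ : ι → Matrix n n ℂ}
    (hσ : ∀ i, IsState (σ i)) : IsState ((Fintype.card ι : ℂ)⁻¹ • ∑ i, σ i) := by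
  have trace_sum_eq : (∑ i, σ i).trace = Fintype.card ι := by simp [trace_sum, (hσ _).2]
  rw [← trace_sum_eq]
  exact isState_inv_trace_smul (posSemidef_sum _ fun i _ => (hσ i).1) (by simp [trace_sum_eq])

theorem exists_isState_eq_trace_smul [Nonempty n] {M : Matrix n n ℂ} (hM : M.PosSemidef) :
    ∃ σ, IsState σ ∧ M = M.trace • σ := by
  by_cases h : M.trace = 0
  · exact ⟨_, isState_inv_card_smul_one, by rw [h, zero_smul, hM.trace_eq_zero_iff.mp h]⟩
  · exact ⟨_, isState_inv_trace_smul hM h, by rw [smul_smul, mul_inv_cancel₀ h, one_smul]⟩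

end States

section Marginal

variable {A B C : Type*} [Fintype A] [Fintype B]

theorem margA_eq_sum_blockDiag (M : Matrix (A × B) (A × B) ℂ) : margA M = ∑ b, blockDiag M b := by
  ext
  simp [margA, Matrix.sum_apply, blockDiag_apply]

theorem isHermitian_margA {M : Matrix (A × B) (A × B) ℂ} (hM : M.IsHermitian) :
    (margA M).IsHermitian := by
  simp only [margA_eq_sum_blockDiag, IsHermitian, conjTranspose_sum, ← blockDiag_conjTranspose,
    hM.eq]

theorem margA_kronecker_one_conj [Fintype C] [DecidableEq B] (V : Matrix C A ℂ)
    (M : Matrix (A × B) (A × B) ℂ) :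
    margA ((V ⊗ₖ (1 : Matrix B B ℂ)) * M * (V ⊗ₖ (1 : Matrix B B ℂ))ᴴ) = V * margA M * Vᴴ := by
  have block_eq (b : B) :
      blockDiag ((V ⊗ₖ (1 : Matrix B B ℂ)) * M * (V ⊗ₖ (1 : Matrix B B ℂ))ᴴ) b
        = V * blockDiag M b * Vᴴ := by
    ext i j
    simp [blockDiag_apply, Matrix.mul_apply, Fintype.sum_prod_type, one_apply, apply_ite]
  simp only [margA_eq_sum_blockDiag, block_eq, Matrix.mul_sum, Matrix.sum_mul]

end Marginal

section DimensionBounds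

open scoped MatrixOrder

variable {Y Z : Type*} [Fintype Y] [Fintype Z] [DecidableEq Z] {ρ : Matrix (Y × Z) (Y × Z) ℂ}

theorem le_card_snd_smul_margA_kronecker_one (hρ : ρ.PosSemidef) :
    ρ ≤ Fintype.card Z • (margA ρ ⊗ₖ (1 : Matrix Z Z ℂ)) := by
  rw [← diagonal_one]
  refine le_card_smul_kronecker_diagonal hρ fun z => ?_
  rw [one_smul, margA_eq_sum_blockDiag]
  exact Finset.single_le_sum (f := blockDiag ρ) (fun z' _ => (hρ.submatrix _).nonneg)
    (Finset.mem_univ z)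

theorem exists_isState_le_card_snd_sq_smul [Nonempty Z] (hρ : ρ.PosSemidef) :
    ∃ σ : Matrix Z Z ℂ, IsState σ ∧ ρ ≤ Fintype.card Z ^ 2 • (margA ρ ⊗ₖ σ) := by
  refine ⟨_, isState_inv_card_smul_one, (le_card_snd_smul_margA_kronecker_one hρ).trans_eq ?_⟩
  simp [kronecker_smul, ← Nat.cast_smul_eq_nsmul ℂ, smul_smul, sq]

variable [Nonempty Y] [Nonempty Z]

theorem exists_isState_le_card_fst_sq_smul_diagonal [DecidableEq Y] (hρ : ρ.PosSemidef) :
    ∃ σ : Matrix Z Z ℂ, IsState σ ∧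
      ρ ≤ Fintype.card Y ^ 2 • (diagonal (margA ρ).diag ⊗ₖ σ) := by
  choose σ hσ hρσ using fun y =>
    exists_isState_eq_trace_smul (hρ.submatrix (Prod.mk (β := Z) y))
  have block_le (y : Y) :
      ρ.submatrix (Prod.mk y) (Prod.mk y) ≤ (margA ρ).diag y • ∑ y', σ y' := by
    have le_sum : σ y ≤ ∑ y', σ y' :=
      Finset.single_le_sum (fun y' _ => (hσ y').1.nonneg) (Finset.mem_univ y)
    have trace_block : (ρ.submatrix (Prod.mk y) (Prod.mk y)).trace = (margA ρ).diag y := rfl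
    rw [hρσ y, trace_block, le_iff, ← smul_sub]
    exact PosSemidef.smul le_sum (hρ.submatrix _).trace_nonneg
  refine ⟨_, isState_inv_card_smul_sum hσ,
    (le_card_smul_diagonal_kronecker hρ block_le).trans_eq ?_⟩
  simp [kronecker_smul, ← Nat.cast_smul_eq_nsmul ℂ, smul_smul, sq]

theorem exists_isState_le_card_fst_sq_smul (hρ : ρ.PosSemidef) :
    ∃ σ : Matrix Z Z ℂ, IsState σ ∧ ρ ≤ Fintype.card Y ^ 2 • (margA ρ ⊗ₖ σ) := by
  obtain ⟨U, hU, d, hd⟩ := exists_mem_unitaryGroup_conj_eq_diagonal (isHermitian_margA hρ.1)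
  have hUU : U * Uᴴ = 1 := mem_unitaryGroup_iff.mp hU
  let V : Matrix (Y × Z) (Y × Z) ℂ := U ⊗ₖ (1 : Matrix Z Z ℂ)
  have hVV : V * Vᴴ = 1 := by
    simp only [V, conjTranspose_kronecker, conjTranspose_one, ← mul_kronecker_mul, hUU,
      Matrix.one_mul, one_kronecker_one]
  have margA_rotated : margA (Vᴴ * ρ * V) = diagonal d := by
    rw [← hd]
    simpa [V, conjTranspose_kronecker] using margA_kronecker_one_conj Uᴴ ρ
  obtain ⟨σ, hσ, rotated_le⟩ :=
    exists_isState_le_card_fst_sq_smul_diagonal (hρ.conjTranspose_mul_mul_same V)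
  refine ⟨σ, hσ, ?_⟩
  calc ρ = V * Vᴴ * ρ * (V * Vᴴ) := by rw [hVV, Matrix.one_mul, Matrix.mul_one]
    _ = V * (Vᴴ * ρ * V) * Vᴴ := by simp only [Matrix.mul_assoc]
    _ ≤ V * (Fintype.card Y ^ 2 • (diagonal d ⊗ₖ σ)) * Vᴴ := by
      rw [margA_rotated, diag_diagonal] at rotated_le
      exact star_right_conjugate_le_conjugate rotated_le V
    _ = Fintype.card Y ^ 2 • ((U * diagonal d * Uᴴ) ⊗ₖ σ) := by
      simp only [V, Matrix.mul_smul, Matrix.smul_mul, conjTranspose_kronecker, conjTranspose_one,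
        ← mul_kronecker_mul, Matrix.one_mul, Matrix.mul_one]
    _ = Fintype.card Y ^ 2 • (margA ρ ⊗ₖ σ) := by
      have diagonalization : U * diagonal d * Uᴴ = margA ρ := by
        rw [← hd, ← Matrix.mul_assoc, ← Matrix.mul_assoc, hUU, Matrix.one_mul, Matrix.mul_assoc,
          hUU, Matrix.mul_one]
      rw [diagonalization]

theorem dimension_bound_relative_min_entropy_general (hρ : ρ.PosSemidef) :
    ∃ σZ : Matrix Z Z ℂ, IsState σZ ∧
      ((((min (Fintype.card Y) (Fintype.card Z) : ℝ)) ^ 2) • (margA ρ ⊗ₖ σZ) - ρ).PosSemidef := by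
  simp only [← Nat.cast_min, ← Nat.cast_pow, Nat.cast_smul_eq_nsmul, ← le_iff]
  rcases le_total (Fintype.card Y) (Fintype.card Z) with h | h
  · simpa only [min_eq_left h] using exists_isState_le_card_fst_sq_smul hρ
  · simpa only [min_eq_right h] using exists_isState_le_card_snd_sq_smul hρ

end DimensionBounds

/-- **Dimension bound for the relative min-entropy:** for any state ρ on Y × Z there is a
state σ_Z on Z with ρ ≤ (min(|Y|,|Z|))² · (ρ_Y ⊗ σ_Z) in the Loewner order. -/
theorem dimension_bound_relative_min_entropy
    {Y Z : Type*} [Fintype Y] [DecidableEq Y] [Nonempty Y]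
    [Fintype Z] [DecidableEq Z] [Nonempty Z]
    (ρ : Matrix (Y × Z) (Y × Z) ℂ) (hρ : IsState ρ) :
    ∃ σZ : Matrix Z Z ℂ, IsState σZ ∧
      ((((min (Fintype.card Y) (Fintype.card Z) : ℝ)) ^ 2) • (margA ρ ⊗ₖ σZ) - ρ).PosSemidef :=
  dimension_bound_relative_min_entropy_general hρ.1

end
end

section
/- Message step for the relative min-entropy (inductive step in the bound on the final state of a communication protocol): Let X, F, M be finite nonempty types, let σ be a quantum state on X × F × M, let ρ_F be a quantum state on F, and let k ≥ 0 be a real number such that σ_{XF} ≤ 2^k · (σ_X ⊗ ρ_F) in the Loewner order, where σ_{XF} and σ_X are the marginals of σ on X × F and on X. Then there exists a quantum state ρ' on F × M such that σ ≤ 2^k · |M|² · (σ_X ⊗ ρ') in the Loewner order, where |M| is the cardinality of M. -/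
open Matrix
open scoped Kronecker Classical ComplexOrder

noncomputable section

/-!
The witness is `ρ' = ρF ⊗ 1 / |M|`. Tensoring the assumed bound on `tr_M σ` with the identity of `M`
reduces the claim to `σ ≤ |M| (tr_M σ ⊗ 1)` for positive semidefinite `σ`. Let `E i j = 1 ⊗ |i⟩⟨j|`.
Since `∑ j, E j j = 1`, the operator Cauchy–Schwarz inequality gives the pinching bound
`σ ≤ |M| ∑ j, (E j j)ᴴ σ (E j j)`, whose right-hand side consists of the terms `i = j` of the Kraus
decomposition `tr_M σ ⊗ 1 = ∑ i j, (E i j)ᴴ σ (E i j)`, a sum of positive semidefinite matrices.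
-/

section StarOrderedRing

variable {R : Type*} [Ring R] [PartialOrder R] [StarRing R] [StarOrderedRing R]

theorem star_sum_mul_mul_sum_le_card_nsmul {ι : Type*} {a : R} (ha : 0 ≤ a) (s : Finset ι)
    (b : ι → R) :
    star (∑ i ∈ s, b i) * a * ∑ i ∈ s, b i ≤ s.card • ∑ i ∈ s, star (b i) * a * b i := by
  induction s using Finset.induction_on with
  | empty => simp
  | insert j s hj ih =>
    -- Adding one summand at a time avoids the symmetrized double sum, which needs a division by 2.
    have cross_nonneg : 0 ≤ ∑ i ∈ s, star (b i - b j) * a * (b i - b j) :=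
      Finset.sum_nonneg fun i _ => star_left_conjugate_nonneg ha _
    have cross_eq : ∑ i ∈ s, star (b i - b j) * a * (b i - b j) =
        ∑ i ∈ s, star (b i) * a * b i - star (∑ i ∈ s, b i) * a * b j
          - star (b j) * a * ∑ i ∈ s, b i + s.card • (star (b j) * a * b j) := by
      simp only [star_sub, sub_mul, mul_sub, Finset.sum_sub_distrib, Finset.sum_const, star_sum,
        Finset.sum_mul, Finset.mul_sum]
      abel
    rw [Finset.sum_insert hj, Finset.sum_insert hj, Finset.card_insert_of_notMem hj, ← sub_nonneg]
    calc 0 ≤ (s.card • ∑ i ∈ s, star (b i) * a * b i - star (∑ i ∈ s, b i) * a * ∑ i ∈ s, b i) +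
          ∑ i ∈ s, star (b i - b j) * a * (b i - b j) :=
          add_nonneg (sub_nonneg.mpr ih) cross_nonneg
      _ = (s.card + 1) • (star (b j) * a * b j + ∑ i ∈ s, star (b i) * a * b i) -
          star (b j + ∑ i ∈ s, b i) * a * (b j + ∑ i ∈ s, b i) := by
          rw [cross_eq]
          simp only [star_add, add_mul, mul_add, succ_nsmul, smul_add]
          abel

end StarOrderedRing

section LoewnerOrder

open scoped MatrixOrder

theorem kronecker_le_kronecker_of_nonneg_right {𝕜 m n : Type*} [RCLike 𝕜] [Finite m] [Finite n]
    {A B : Matrix m m 𝕜} {C : Matrix n n 𝕜} (hAB : A ≤ B) (hC : 0 ≤ C) :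
    A ⊗ₖ C ≤ B ⊗ₖ C := by
  have sub_kronecker : B ⊗ₖ C - A ⊗ₖ C = (B - A) ⊗ₖ C := by
    rw [sub_eq_iff_eq_add, ← add_kronecker, sub_add_cancel]
  rw [Matrix.le_iff, sub_kronecker]
  exact (Matrix.le_iff.mp hAB).kronecker (Matrix.nonneg_iff_posSemidef.mp hC)

theorem submatrix_equiv_le_submatrix_equiv_iff {𝕜 m n : Type*} [RCLike 𝕜]
    {A B : Matrix n n 𝕜} (e : m ≃ n) : A.submatrix e e ≤ B.submatrix e e ↔ A ≤ B :=
  Matrix.posSemidef_submatrix_equiv (M := B - A) e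

end LoewnerOrder

section LocalUnit

variable {S M : Type*} [DecidableEq S] [DecidableEq M]

variable (S) in
/-- The local matrix unit `1 ⊗ |i⟩⟨j|` on `S × M`. These are the Kraus operators of the map
`σ ↦ tr_M σ ⊗ 1`, and those with `i = j` are the Kraus operators of the pinching in the basis of
`M`. -/
def localUnit (i j : M) : Matrix (S × M) (S × M) ℂ :=
  (1 : Matrix S S ℂ) ⊗ₖ Matrix.single i j 1

variable [Fintype M]

theorem sum_localUnit_self : ∑ i : M, localUnit S i i = 1 := by
  rw [← one_kronecker_one, ← sum_single_one (m := M)]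
  exact (map_sum (kroneckerBilinear (R := ℂ) (1 : Matrix S S ℂ)) _ _).symm

variable [Fintype S]

theorem star_localUnit_mul_mul_localUnit (σ : Matrix (S × M) (S × M) ℂ) (i j : M) :
    star (localUnit S i j) * σ * localUnit S i j =
      (σ.submatrix (·, i) (·, i)) ⊗ₖ Matrix.single j j 1 := by
  have star_localUnit : star (localUnit S i j) = localUnit S j i := by
    simp [localUnit, star_eq_conjTranspose, conjTranspose_kronecker]
  rw [star_localUnit]
  ext ⟨s, k⟩ ⟨t, l⟩
  rcases eq_or_ne j k with rfl | hjk <;>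
    simp [localUnit, mul_apply, Fintype.sum_prod_type, one_apply, single_apply, ite_and, *]

theorem sum_star_localUnit_mul_mul_localUnit (σ : Matrix (S × M) (S × M) ℂ) :
    ∑ j, ∑ i, star (localUnit S i j) * σ * localUnit S i j = margA σ ⊗ₖ (1 : Matrix M M ℂ) := by
  ext ⟨s, k⟩ ⟨t, l⟩
  simp [star_localUnit_mul_mul_localUnit, Matrix.sum_apply, margA, one_apply, single_apply,
    ite_and]

end LocalUnit

section PartialTrace

open scoped MatrixOrder

variable {S M : Type*} [Fintype S] [Fintype M] [DecidableEq M]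

theorem le_card_nsmul_margA_kronecker_one {σ : Matrix (S × M) (S × M) ℂ} (hσ : 0 ≤ σ) :
    σ ≤ Fintype.card M • (margA σ ⊗ₖ (1 : Matrix M M ℂ)) := by
  have diag_le (j : M) : star (localUnit S j j) * σ * localUnit S j j ≤
      ∑ i, star (localUnit S i j) * σ * localUnit S i j :=
    Finset.single_le_sum (f := fun i => star (localUnit S i j) * σ * localUnit S i j)
      (fun i _ => star_left_conjugate_nonneg hσ _) (Finset.mem_univ j)
  calc σ = star (∑ j, localUnit S j j) * σ * ∑ j : M, localUnit S j j := by
        rw [sum_localUnit_self, star_one, one_mul, mul_one]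
    _ ≤ Fintype.card M • ∑ j, star (localUnit S j j) * σ * localUnit S j j :=
        star_sum_mul_mul_sum_le_card_nsmul hσ Finset.univ _
    _ ≤ Fintype.card M • ∑ j, ∑ i, star (localUnit S i j) * σ * localUnit S i j :=
        nsmul_le_nsmul_right (Finset.sum_le_sum fun j _ => diag_le j) _
    _ = Fintype.card M • (margA σ ⊗ₖ (1 : Matrix M M ℂ)) := by
        rw [sum_star_localUnit_mul_mul_localUnit]

end PartialTrace

section States

variable {S M : Type*} [Fintype S] [DecidableEq S] [Fintype M] [DecidableEq M]

theorem IsState.kronecker {ρ : Matrix S S ℂ} {τ : Matrix M M ℂ} (hρ : IsState ρ)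
    (hτ : IsState τ) : IsState (ρ ⊗ₖ τ) :=
  ⟨hρ.1.kronecker hτ.1, by rw [trace_kronecker, hρ.2, hτ.2, one_mul]⟩

variable (M) in
/-- The maximally mixed state `1 / |M|` on `M`, the message part of the witness state. -/
def maximallyMixed : Matrix M M ℂ :=
  (Fintype.card M : ℝ)⁻¹ • 1

theorem isState_maximallyMixed [Nonempty M] : IsState (maximallyMixed M) :=
  ⟨Matrix.PosSemidef.one.smul (by positivity), by simp [maximallyMixed, trace_smul]⟩

theorem one_eq_card_smul_maximallyMixed [Nonempty M] :
    (1 : Matrix M M ℂ) = (Fintype.card M : ℝ) • maximallyMixed M :=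
  (smul_inv_smul₀ (Nat.cast_ne_zero.mpr Fintype.card_ne_zero) 1).symm

end States

open scoped MatrixOrder in
theorem message_step_relative_min_entropy_general
    {X F M : Type*} [Fintype X] [Fintype F] [DecidableEq F] [Fintype M] [DecidableEq M] [Nonempty M]
    {σ : Matrix (X × F × M) (X × F × M) ℂ} {τ : Matrix X X ℂ} {ρF : Matrix F F ℂ} {c : ℝ}
    (hσ : 0 ≤ σ) (hρF : IsState ρF)
    (hsub : margA (σ.submatrix (Equiv.prodAssoc X F M) (Equiv.prodAssoc X F M)) ≤ c • (τ ⊗ₖ ρF)) :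
    ∃ ρ' : Matrix (F × M) (F × M) ℂ, IsState ρ' ∧
      σ ≤ (c * (Fintype.card M : ℝ) ^ 2) • (τ ⊗ₖ ρ') := by
  refine ⟨ρF ⊗ₖ maximallyMixed M, hρF.kronecker isState_maximallyMixed, ?_⟩
  let e := Equiv.prodAssoc X F M
  rw [← submatrix_equiv_le_submatrix_equiv_iff e]
  have hσe : 0 ≤ σ.submatrix e e := (submatrix_equiv_le_submatrix_equiv_iff e).mpr hσ
  have hone : (0 : Matrix M M ℂ) ≤ 1 := Matrix.nonneg_iff_posSemidef.mpr .one
  calc σ.submatrix e e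
      ≤ Fintype.card M • (margA (σ.submatrix e e) ⊗ₖ (1 : Matrix M M ℂ)) :=
        le_card_nsmul_margA_kronecker_one hσe
    _ ≤ Fintype.card M • ((c • (τ ⊗ₖ ρF)) ⊗ₖ (1 : Matrix M M ℂ)) :=
        nsmul_le_nsmul_right (kronecker_le_kronecker_of_nonneg_right hsub hone) _
    _ = (c * (Fintype.card M : ℝ) ^ 2) • ((τ ⊗ₖ ρF) ⊗ₖ maximallyMixed M) := by
        rw [one_eq_card_smul_maximallyMixed, smul_kronecker, kronecker_smul, smul_smul,
          ← Nat.cast_smul_eq_nsmul ℝ, smul_smul]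
        congr 1
        ring
    _ = ((c * (Fintype.card M : ℝ) ^ 2) • (τ ⊗ₖ (ρF ⊗ₖ maximallyMixed M))).submatrix e e := by
        rw [← kronecker_assoc']
        rfl

/-- **Message step for the relative min-entropy** (inductive step in the bound on the final
state of a communication protocol).  Here `σ` is a state on `X × F × M`, its marginal on
`X × F` is written out explicitly by tracing out `M`, and `margA σ` is its marginal on `X`. -/
theorem message_step_relative_min_entropy
    {X F M : Type*} [Fintype X] [DecidableEq X] [Nonempty X]
    [Fintype F] [DecidableEq F] [Nonempty F]
    [Fintype M] [DecidableEq M] [Nonempty M]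
    (σ : Matrix (X × F × M) (X × F × M) ℂ) (ρF : Matrix F F ℂ) (k : ℝ)
    (hσ : IsState σ) (hρF : IsState ρF) (hk : 0 ≤ k)
    (hsub : (((2 : ℝ) ^ k) • (margA σ ⊗ₖ ρF) -
        Matrix.of (fun p q : X × F => ∑ m, σ (p.1, p.2, m) (q.1, q.2, m))).PosSemidef) :
    ∃ ρ' : Matrix (F × M) (F × M) ℂ, IsState ρ' ∧
      ((((2 : ℝ) ^ k) * (Fintype.card M : ℝ) ^ 2) • (margA σ ⊗ₖ ρ') - σ).PosSemidef :=
  message_step_relative_min_entropy_general (Matrix.nonneg_iff_posSemidef.mpr hσ.1) hρF hsub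

end
end

section
/- Divergence bound after conditioning on a success event: Let X₁, …, X_n and 𝒜 be finite nonempty types, let Qᵢ be a probability distribution on Xᵢ for each i, and let P be a probability distribution on (X₁ × ⋯ × X_n) × 𝒜 whose marginal on X₁ × ⋯ × X_n equals the product Q₁ ⊗ ⋯ ⊗ Q_n. Let E be a subset of (X₁ × ⋯ × X_n) × 𝒜 with P(E) = γ > 0, let P' be P conditioned on E, and let C ⊆ {1,…,n}. Writing R = ((Xᵢ)_{i ∈ C}, 𝒜) for the combined register consisting of the coordinates in C together with 𝒜, we have D( P'_{X_{C̄} R} ‖ (⊗_{i ∉ C} Qᵢ) ⊗ P'_R ) ≤ ln|𝒜| + ln(1/γ), where X_{C̄} denotes the coordinates outside C and D is relative entropy in nats. -/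
open scoped Classical

/-!
By Jensen's inequality, `D(p ‖ q)` is at most `ln ∑ p² / q`. The conditioned distribution satisfies
`P' ≤ (∏ Qᵢ) / γ` pointwise, so for the reference distribution `q = (⊗_{i ∉ C} Qᵢ) ⊗ P'_R` the
factors `Qᵢ` with `i ∉ C` cancel from `P'² / q`, leaving at most `P' · (∏_{i ∈ C} Qᵢ) / (γ P'_R)`.
Summing over the fibres of the map to the register `R` cancels `P'_R`, and what remains is the total
mass `|𝒜| / γ` of `(∏_{i ∈ C} Qᵢ) / γ` on the register.
-/

section RelativeEntropy

variable {S : Type*} [Fintype S] {p q : S → ℝ}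

lemma sum_sq_div_pos (hp : ∀ s, 0 ≤ p s) (hp_sum : 0 < ∑ s, p s)
    (hq : ∀ s, 0 < p s → 0 < q s) : 0 < ∑ s, p s ^ 2 / q s := by
  obtain ⟨t, -, ht⟩ : ∃ t ∈ Finset.univ, 0 < p t :=
    Finset.exists_lt_of_sum_lt (by simpa using hp_sum)
  refine Finset.sum_pos' (fun s _ => ?_) ⟨t, Finset.mem_univ t, by have := hq t ht; positivity⟩
  obtain hs | hs := (hp s).eq_or_lt
  · simp [← hs]
  · have := hq s hs
    positivity

lemma relEntropy_le_log_sum_sq_div (hp : ∀ s, 0 ≤ p s) (hp_sum : ∑ s, p s = 1)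
    (hq : ∀ s, 0 < p s → 0 < q s) : relEntropy p q ≤ Real.log (∑ s, p s ^ 2 / q s) := by
  have sum_support (f : S → ℝ) : ∑ s with 0 < p s, p s * f s = ∑ s, p s * f s :=
    Finset.sum_filter_of_ne fun s _ hs => (hp s).lt_of_ne' (left_ne_zero_of_mul hs)
  calc relEntropy p q = ∑ s with 0 < p s, p s • Real.log (p s / q s) :=
        (Finset.sum_filter _ _).symm
    _ ≤ Real.log (∑ s with 0 < p s, p s • (p s / q s)) := by
        refine strictConcaveOn_log_Ioi.concaveOn.le_map_sum (fun s _ => hp s) ?_ fun s hs => ?_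
        · simpa [hp_sum] using sum_support 1
        · have hs := (Finset.mem_filter.1 hs).2
          exact div_pos hs (hq s hs)
    _ = Real.log (∑ s, p s ^ 2 / q s) := by
        simp only [smul_eq_mul, sum_support, sq, mul_div_assoc]

end RelativeEntropy

section Pushforward

variable {S R : Type*} [Fintype S]

/-- The image under `f` of the weights `p`; a marginal when `f` is a projection. -/
noncomputable def pushforward (f : S → R) (p : S → ℝ) (r : R) : ℝ :=
  ∑ s with f s = r, p s

variable (f : S → R) {p : S → ℝ}

lemma pushforward_nonneg (hp : ∀ s, 0 ≤ p s) (r : R) : 0 ≤ pushforward f p r :=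
  Finset.sum_nonneg fun s _ => hp s

lemma le_pushforward (hp : ∀ s, 0 ≤ p s) (s : S) : p s ≤ pushforward f p (f s) :=
  Finset.single_le_sum (fun t _ => hp t) (by simp)

variable [Fintype R]

lemma sum_mul_comp_eq_sum_pushforward_mul (p : S → ℝ) (h : R → ℝ) :
    ∑ s, p s * h (f s) = ∑ r, pushforward f p r * h r := by
  simp only [pushforward, Finset.sum_mul]
  rw [← Finset.sum_fiberwise Finset.univ f]
  refine Finset.sum_congr rfl fun r _ => Finset.sum_congr rfl fun s hs => ?_
  rw [(Finset.mem_filter.1 hs).2]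

lemma sum_mul_div_pushforward_le (p : S → ℝ) {q : R → ℝ} (hq : ∀ r, 0 ≤ q r) :
    ∑ s, p s * (q (f s) / pushforward f p (f s)) ≤ ∑ r, q r := by
  rw [sum_mul_comp_eq_sum_pushforward_mul f p fun r => q r / pushforward f p r]
  refine Finset.sum_le_sum fun r _ => ?_
  rw [mul_div_left_comm]
  exact mul_le_of_le_one_right (hq r) (div_self_le_one _)

lemma relEntropy_mul_pushforward_le_log_sum {g : S → ℝ} {q : R → ℝ} (hp : ∀ s, 0 ≤ p s)
    (hp_sum : ∑ s, p s = 1) (hq : ∀ r, 0 ≤ q r)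
    (hpgq : ∀ s, p s ≤ g s * q (f s)) :
    relEntropy p (fun s => g s * pushforward f p (f s)) ≤ Real.log (∑ r, q r) := by
  have g_pos (s : S) (hs : 0 < p s) : 0 < g s :=
    pos_of_mul_pos_left (hs.trans_le (hpgq s)) (hq (f s))
  have reference_pos (s : S) (hs : 0 < p s) : 0 < g s * pushforward f p (f s) :=
    mul_pos (g_pos s hs) (hs.trans_le (le_pushforward f hp s))
  refine (relEntropy_le_log_sum_sq_div hp hp_sum reference_pos).trans <|
    Real.log_le_log (sum_sq_div_pos hp (by simp [hp_sum]) reference_pos) <|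
    (Finset.sum_le_sum fun s _ => ?_).trans (sum_mul_div_pushforward_le f p hq)
  obtain hs | hs := (hp s).eq_or_lt
  · simp [← hs]
  · have := pushforward_nonneg f hp (f s)
    calc p s ^ 2 / (g s * pushforward f p (f s))
        = p s * (p s / g s / pushforward f p (f s)) := by rw [div_div, sq, mul_div_assoc]
      _ ≤ p s * (q (f s) / pushforward f p (f s)) := by
          gcongr
          exact (div_le_iff₀' (g_pos s hs)).2 (hpgq s)

end Pushforward

section Conditioning

variable {S : Type*} [Fintype S] {P : S → ℝ} {E : Set S}

/-- The probability of the event `E` under the weights `P`. -/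
noncomputable def eventProb (P : S → ℝ) (E : Set S) : ℝ :=
  ∑ s, if s ∈ E then P s else 0

/-- The weights `P` conditioned on the event `E`; identically zero if `E` has probability zero. -/
noncomputable def conditionOn (P : S → ℝ) (E : Set S) (s : S) : ℝ :=
  if s ∈ E then P s / eventProb P E else 0

lemma conditionOn_nonneg (hP : ∀ s, 0 ≤ P s) (hE : 0 ≤ eventProb P E) (s : S) :
    0 ≤ conditionOn P E s :=
  ite_nonneg (div_nonneg (hP s) hE) le_rfl

lemma sum_conditionOn (hE : eventProb P E ≠ 0) : ∑ s, conditionOn P E s = 1 := by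
  calc ∑ s, conditionOn P E s = ∑ s, (if s ∈ E then P s else 0) / eventProb P E := by
        simp only [conditionOn, ite_div, zero_div]
    _ = eventProb P E / eventProb P E := (Finset.sum_div _ _ _).symm
    _ = 1 := div_self hE

lemma conditionOn_le (hP : ∀ s, 0 ≤ P s) (hE : 0 ≤ eventProb P E) (s : S) :
    conditionOn P E s ≤ P s / eventProb P E :=
  (ite_le_sup _ _ _).trans (sup_le le_rfl (div_nonneg (hP s) hE))

end Conditioning

section Register

variable {ι : Type*} {X : ι → Type*} {A : Type*}

/-- The projection to the combined register `R = ((Xᵢ)_{i ∈ C}, 𝒜)`. -/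
def register (C : Finset ι) (s : (∀ i, X i) × A) : (∀ i : C, X i) × A :=
  (C.restrict s.1, s.2)

variable [DecidableEq ι] [∀ i, Fintype (X i)] [Fintype A]

lemma sum_register_prod {Q : ∀ i, X i → ℝ} (hQ : ∀ i, ∑ xi, Q i xi = 1) (C : Finset ι) :
    ∑ r : (∀ i : C, X i) × A, ∏ i : C, Q i (r.1 i) = Fintype.card A := by
  rw [Fintype.sum_prod_type_right]
  have total_mass : ∑ y : ∀ i : C, X i, ∏ i : C, Q i (y i) = 1 := by
    rw [← Fintype.prod_sum fun i : C => Q i]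
    simp only [hQ, Finset.prod_const_one]
  simp only [total_mass, Finset.sum_const, Finset.card_univ, nsmul_one]

variable [Fintype ι]

lemma pushforward_register (C : Finset ι) (p : (∀ i, X i) × A → ℝ) (s : (∀ i, X i) × A)
    [∀ x : ∀ i, X i, Decidable (∀ i ∈ C, x i = s.1 i)] :
    pushforward (register C) p (register C s) =
      ∑ x, if ∀ i ∈ C, x i = s.1 i then p (x, s.2) else 0 := by
  have register_eq_iff (x : ∀ i, X i) (a : A) :
      register C (x, a) = register C s ↔ (∀ i ∈ C, x i = s.1 i) ∧ a = s.2 := by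
    simp [register, funext_iff]
  simp only [pushforward, Finset.sum_filter, Fintype.sum_prod_type, register_eq_iff, ite_and,
    Finset.sum_ite_irrel, Finset.sum_const_zero, Finset.sum_ite_eq', Finset.mem_univ, if_true]
  congr!

theorem divergence_after_conditioning_general {Q : ∀ i, X i → ℝ} (hQ0 : ∀ i xi, 0 ≤ Q i xi)
    (hQ1 : ∀ i, ∑ xi, Q i xi = 1) {P : (∀ i, X i) × A → ℝ} (hP0 : ∀ s, 0 ≤ P s)
    (hmarg : ∀ x : ∀ i, X i, ∑ a, P (x, a) ≤ ∏ i, Q i (x i))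
    {E : Set ((∀ i, X i) × A)} (hE : 0 < eventProb P E) (C : Finset ι) :
    relEntropy (conditionOn P E) (fun s => (∏ i ∈ Cᶜ, Q i (s.1 i)) *
        pushforward (register C) (conditionOn P E) (register C s)) ≤
      Real.log (Fintype.card A) + Real.log (1 / eventProb P E) := by
  have card_ne_zero : (Fintype.card A : ℝ) ≠ 0 := by
    obtain ⟨s, -, -⟩ := Finset.exists_ne_zero_of_sum_ne_zero hE.ne'
    have : Nonempty A := ⟨s.2⟩
    exact Nat.cast_ne_zero.2 Fintype.card_ne_zero
  have conditionOn_le_prod (s : (∀ i, X i) × A) : conditionOn P E s ≤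
      (∏ i ∈ Cᶜ, Q i (s.1 i)) * ((∏ i : C, Q i (s.1 i)) / eventProb P E) := by
    have le_prod : P s ≤ ∏ i, Q i (s.1 i) :=
      (Finset.single_le_sum (f := fun a => P (s.1, a)) (fun a _ => hP0 _)
        (Finset.mem_univ s.2)).trans (hmarg s.1)
    rw [← mul_div_assoc, Finset.prod_coe_sort C fun i => Q i (s.1 i), Finset.prod_compl_mul_prod]
    exact (conditionOn_le hP0 hE.le s).trans (by gcongr)
  refine (relEntropy_mul_pushforward_le_log_sum (register C)
    (q := fun r => (∏ i : C, Q i (r.1 i)) / eventProb P E) (conditionOn_nonneg hP0 hE.le)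
    (sum_conditionOn hE.ne')
    (fun r => div_nonneg (Finset.prod_nonneg fun i _ => hQ0 i _) hE.le)
    conditionOn_le_prod).trans_eq ?_
  rw [← Finset.sum_div, sum_register_prod hQ1, div_eq_mul_one_div,
    Real.log_mul card_ne_zero (one_div_pos.2 hE).ne']

end Register

/-- **Divergence bound after conditioning on a success event.**
`P'` is `P` conditioned on the event `E` (of probability `γ`), and `PR'` evaluated at
`(x, a)` is the marginal of `P'` on the combined register `R = ((Xᵢ)_{i ∈ C}, 𝒜)`,
evaluated at the `C`-coordinates of `x` together with `a`.  The left-hand side is the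
relative entropy (in nats) of the distribution `P'`, viewed on `X_{C̄} × R`, from
`(⊗_{i ∉ C} Qᵢ) ⊗ P'_R`. -/
theorem divergence_after_conditioning
    {n : ℕ} (X : Fin n → Type*) [∀ i, Fintype (X i)] [∀ i, Nonempty (X i)]
    {A : Type*} [Fintype A] [Nonempty A]
    (Q : ∀ i, X i → ℝ) (hQ0 : ∀ i xi, 0 ≤ Q i xi) (hQ1 : ∀ i, ∑ xi, Q i xi = 1)
    (P : ((∀ i, X i) × A) → ℝ) (hP0 : ∀ s, 0 ≤ P s) (hP1 : ∑ s, P s = 1)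
    (hmarg : ∀ x : ∀ i, X i, (∑ a, P (x, a)) = ∏ i, Q i (x i))
    (E : Set ((∀ i, X i) × A)) (γ : ℝ) (hγ : 0 < γ)
    (hPE : ∑ s, (if s ∈ E then P s else 0) = γ)
    (C : Finset (Fin n)) :
    let P' : ((∀ i, X i) × A) → ℝ := fun s => if s ∈ E then P s / γ else 0
    let PR' : ((∀ i, X i) × A) → ℝ :=
      fun s => ∑ x, if (∀ i ∈ C, x i = s.1 i) then P' (x, s.2) else 0
    (∑ s, if 0 < P' s then
        P' s * Real.log (P' s / ((∏ i ∈ Cᶜ, Q i (s.1 i)) * PR' s)) else 0) ≤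
      Real.log (Fintype.card A) + Real.log (1 / γ) := by
  intro _ _
  subst hPE
  have bound := divergence_after_conditioning_general hQ0 hQ1 hP0 (fun x => (hmarg x).le) hγ C
  simp only [pushforward_register] at bound
  exact bound
end
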